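/- arXiv:1803.00495 — 3 statements merged into one kernel-verified Lean document; each statement's English description precedes it below -/
import Mathlib

section
/- Let t_0 be a nonzero real number and set s_0 = 1 + 2it_0. Then ζ'(s)/ζ(s) is analytic at s_0, and for every integer n ≥ 0 its n-th Taylor coefficient C_{n,s_0} at s_0 (i.e., the coefficient of (s − s_0)^n in the expansion ζ'(s)/ζ(s) = Σ_{n≥0} C_{n,s_0}(s − s_0)^n) satisfies |C_{n,s_0}| ≤ A_n ( |t_0|^{−(n+1)} + (log(|t_0| + 2))^{n+1} ), where A_n > 0 is a constant depending only on n. -/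
open Complex

lemma extract_one {g : ℂ → ℂ} (hg : Differentiable ℂ g) {w : ℂ} (hw : g w ≠ 0) (ρ : ℂ) :
    ∃ (k : ℕ) (g1 : ℂ → ℂ), Differentiable ℂ g1 ∧ g1 ρ ≠ 0 ∧ ∀ z, g z = (z - ρ) ^ k * g1 z := by
  obtain ⟨p, hp⟩ := hg.analyticAt ρ
  have hp0 : p ≠ 0 := by
    intro h
    have h1 := hp.locally_zero_iff.mpr h
    have h2 : AnalyticOnNhd ℂ g Set.univ := fun z _ => hg.analyticAt z
    have := h2.eqOn_zero_of_preconnected_of_eventuallyEq_zero isPreconnected_univ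
      (Set.mem_univ ρ) h1 (Set.mem_univ w)
    exact hw this
  refine ⟨p.order, (Function.swap dslope ρ)^[p.order] g, ?_, hp.iterate_dslope_fslope_ne_zero hp0,
    fun z => by simpa using hp.eq_pow_order_mul_iterate_dslope z⟩
  generalize p.order = n
  induction n with
  | zero => simpa using hg
  | succ n ih =>
    rw [Function.iterate_succ_apply', ← differentiableOn_univ]
    exact (Complex.differentiableOn_dslope (by simp)).2 ih.differentiableOn

lemma extract_finset {f : ℂ → ℂ} (hf : Differentiable ℂ f) {w : ℂ} (hw : f w ≠ 0) (S : Finset ℂ) :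
    ∃ (m : ℂ → ℕ) (g : ℂ → ℂ), Differentiable ℂ g ∧ (∀ ρ ∈ S, g ρ ≠ 0) ∧
      ∀ z, f z = (∏ ρ ∈ S, (z - ρ) ^ m ρ) * g z := by
  classical
  induction S using Finset.induction_on with
  | empty => exact ⟨fun _ => 0, f, hf, by simp, by simp⟩
  | insert a S ha ih =>
    obtain ⟨m, g, hg, hgS, hfg⟩ := ih
    have hgw : g w ≠ 0 := fun h => hw (by rw [hfg, h, mul_zero])
    obtain ⟨k, g1, hg1, hg1a, hgg⟩ := extract_one hg hgw a
    refine ⟨Function.update m a k, g1, hg1, ?_, ?_⟩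
    · intro ρ hρ
      rcases Finset.mem_insert.1 hρ with rfl | h
      · exact hg1a
      · intro h0; exact hgS ρ h (by rw [hgg, h0, mul_zero])
    · intro z
      rw [Finset.prod_insert ha, hfg, hgg]
      have : ∏ ρ ∈ S, (z - ρ) ^ Function.update m a k ρ = ∏ ρ ∈ S, (z - ρ) ^ m ρ := by
        refine Finset.prod_congr rfl fun ρ hρ => ?_
        rw [Function.update_of_ne (by rintro rfl; exact ha hρ)]
      rw [this]; simp; ring

lemma zeros_finite {f : ℂ → ℂ} (hf : Differentiable ℂ f) {w : ℂ} (hw : f w ≠ 0) (c : ℂ) (r : ℝ) :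
    {z | ‖z - c‖ ≤ r ∧ f z = 0}.Finite := by
  have h2 : AnalyticOnNhd ℂ f Set.univ := fun z _ => hf.analyticAt z
  have h3 := h2.preimage_zero_mem_codiscrete hw
  have h4 := mem_codiscrete'.mp h3
  have hK : IsCompact (Metric.closedBall c r ∩ f ⁻¹' {0}) :=
    (isCompact_closedBall c r).inter_right (isClosed_singleton.preimage hf.continuous)
  have := hK.finite (IsDiscrete.mono (by simpa using h4.2) Set.inter_subset_right)
  convert this using 1
  ext z; simp [dist_eq_norm]

lemma logderiv_nonvanishing {g : ℂ → ℂ} (hg : Differentiable ℂ g) {c : ℂ} {R M : ℝ} (hR : 0 < R)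
    (hM : 1 < M) (h0 : ∀ z ∈ Metric.ball c (R / 2), g z ≠ 0)
    (hb : ∀ z ∈ Metric.ball c (R / 2), ‖g z‖ ≤ M * ‖g c‖) {z : ℂ} (hz : ‖z - c‖ ≤ R / 4) :
    ‖deriv g z / g z‖ ≤ 48 * Real.log M / R := by
  have hlog : 0 < Real.log M := Real.log_pos hM
  have hd : DifferentiableOn ℂ (fun z => deriv g z / g z) (Metric.ball c (R / 2)) :=
    (hg.deriv.differentiableOn).div hg.differentiableOn h0
  obtain ⟨H, hH⟩ := hd.isExactOn_ball
  set h : ℂ → ℂ := fun z => H z - H c with hh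
  have hc : c ∈ Metric.ball c (R / 2) := Metric.mem_ball_self (by positivity)
  have hh' : ∀ z ∈ Metric.ball c (R / 2), HasDerivAt h (deriv g z / g z) z := fun z hz =>
    (hH z hz).sub_const _
  have hconst : ∀ z ∈ Metric.ball c (R / 2), exp (-h z) * g z = g c := by
    intro z hz
    have hdz : ∀ z ∈ Metric.ball c (R / 2), HasDerivAt (fun z => exp (-h z) * g z) 0 z := by
      intro z hz
      have h1 := ((hh' z hz).neg.cexp).mul (hg z).hasDerivAt
      convert! h1 using 1
      have := h0 z hz
      simp only [Pi.neg_apply]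
      field_simp
      ring
    have := (convex_ball c (R/2)).is_const_of_fderivWithin_eq_zero (𝕜 := ℂ)
      (f := fun z => exp (-h z) * g z)
      (fun z hz => (hdz z hz).differentiableAt.differentiableWithinAt)
      (fun z hz => by
        rw [fderivWithin_of_isOpen Metric.isOpen_ball hz]
        have := (hdz z hz).hasFDerivAt.fderiv
        rw [this]; ext; simp) hz hc
    simpa [hh] using this
  have hre : ∀ z ∈ Metric.ball c (R / 2), (h z).re ≤ Real.log M := by
    intro z hz
    have h1 := congrArg norm (hconst z hz)
    rw [norm_mul, Complex.norm_exp] at h1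
    have h2 := hb z hz
    have h3 : 0 < ‖g z‖ := norm_pos_iff.2 (h0 z hz)
    rw [← h1] at h2
    have h4 : 1 ≤ M * Real.exp (-h z).re := by
      by_contra hcon
      push Not at hcon
      nlinarith
    rw [Complex.neg_re, Real.exp_neg] at h4
    have h5 := Real.exp_pos (h z).re
    rw [Real.le_log_iff_exp_le (by linarith)]
    rw [← div_eq_mul_inv, le_div_iff₀ h5] at h4
    linarith
  have hbound : ∀ z, ‖z - c‖ ≤ 3 * R / 8 → ‖h z‖ ≤ 6 * Real.log M := by
    intro z hz
    have key := Complex.borelCaratheodory_zero (f := fun w => h (c + w)) (R := R / 2) (z := z - c)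
      hlog ?_ ?_ (by positivity) (by simp; linarith) (by simp [hh])
    · simp only [add_sub_cancel] at key
      refine key.trans ?_
      rw [div_le_iff₀ (by linarith)]
      nlinarith
    · intro w hw
      have : c + w ∈ Metric.ball c (R / 2) := by simpa [dist_eq_norm] using hw
      exact (((hh' _ this).differentiableAt).comp w (by fun_prop)).differentiableWithinAt
    · intro w hw
      have : c + w ∈ Metric.ball c (R / 2) := by simpa [dist_eq_norm] using hw
      exact hre _ this
  have hzb : ∀ w ∈ Metric.closedBall z (R / 8), ‖w - c‖ ≤ 3 * R / 8 := by
    intro w hw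
    have h1 : ‖w - z‖ ≤ R / 8 := by simpa [dist_eq_norm] using hw
    have : w - c = (w - z) + (z - c) := by ring
    rw [this]
    exact (norm_add_le _ _).trans (by linarith)
  have hzz : z ∈ Metric.ball c (R / 2) := by simp [dist_eq_norm]; linarith
  have := Complex.norm_deriv_le_of_forall_mem_sphere_norm_le (c := z) (R := R / 8) (f := h)
    (C := 6 * Real.log M) (by positivity) ?_ ?_
  · rw [(hh' z hzz).deriv] at this
    refine this.trans (le_of_eq ?_)
    field_simp; ring
  · refine DifferentiableOn.diffContOnCl_ball (U := Metric.ball c (R / 2)) ?_ ?_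
    · exact fun z hz => (hh' z hz).differentiableAt.differentiableWithinAt
    · intro w hw
      have := hzb w hw
      simp [dist_eq_norm]; linarith
  · intro w hw
    exact hbound w (hzb w (Metric.sphere_subset_closedBall hw))

lemma landau {f : ℂ → ℂ} (hf : Differentiable ℂ f) {c : ℂ} {R M : ℝ} (hR : 0 < R) (hM : 1 < M)
    (hfc : f c ≠ 0) (hb : ∀ z, ‖z - c‖ = R → ‖f z‖ ≤ M * ‖f c‖) :
    ∃ (S : Finset ℂ) (m : ℂ → ℕ), (∀ ρ ∈ S, f ρ = 0 ∧ ‖ρ - c‖ ≤ R / 2) ∧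
      (∀ ρ, ‖ρ - c‖ ≤ R / 2 → f ρ = 0 → ρ ∈ S ∧ 1 ≤ m ρ) ∧
      ∀ z, ‖z - c‖ ≤ R / 4 → f z ≠ 0 →
        ‖deriv f z / f z - ∑ ρ ∈ S, (m ρ : ℂ) / (z - ρ)‖ ≤ 48 * Real.log M / R := by
  have hfin := zeros_finite hf hfc c (R / 2)
  set S := hfin.toFinset with hS
  have hmem : ∀ ρ, ρ ∈ S ↔ ‖ρ - c‖ ≤ R / 2 ∧ f ρ = 0 := by intro ρ; simp [hS]
  obtain ⟨m, g, hg, hgS, hfg⟩ := extract_finset hf hfc S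
  have hg0 : ∀ z, ‖z - c‖ ≤ R / 2 → g z ≠ 0 := by
    intro z hz h
    have : f z = 0 := by rw [hfg, h, mul_zero]
    exact hgS z ((hmem z).2 ⟨hz, this⟩) h
  refine ⟨S, m, fun ρ hρ => ((hmem ρ).1 hρ).symm, fun ρ h1 h2 => ?_, ?_⟩
  · have hρ := (hmem ρ).2 ⟨h1, h2⟩
    refine ⟨hρ, ?_⟩
    by_contra hm
    have hm0 : m ρ = 0 := by omega
    have h3 := hfg ρ
    rw [h2] at h3
    have h4 : ∏ x ∈ S, (ρ - x) ^ m x ≠ 0 := by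
      rw [Finset.prod_ne_zero_iff]
      intro x hx
      by_cases hxx : x = ρ
      · subst hxx; simp [hm0]
      · exact pow_ne_zero _ (sub_ne_zero.2 (Ne.symm hxx))
    exact (mul_ne_zero h4 (hgS ρ hρ)) h3.symm
  · have hsph : ∀ z ∈ Metric.sphere c R, ‖g z‖ ≤ M * ‖g c‖ := by
      intro z hz
      have hz' : ‖z - c‖ = R := by simpa [dist_eq_norm] using hz
      have h1 := hb z hz'
      rw [hfg z, hfg c, norm_mul, norm_mul] at h1
      have hP : ‖∏ x ∈ S, (c - x) ^ m x‖ ≤ ‖∏ x ∈ S, (z - x) ^ m x‖ := by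
        rw [norm_prod, norm_prod]
        refine Finset.prod_le_prod (fun _ _ => norm_nonneg _) fun x hx => ?_
        rw [norm_pow, norm_pow]
        refine pow_le_pow_left₀ (norm_nonneg _) ?_ _
        have h2 := ((hmem x).1 hx).1
        have h3 : ‖z - c‖ ≤ ‖z - x‖ + ‖x - c‖ := by
          have : z - c = (z - x) + (x - c) := by ring
          rw [this]; exact norm_add_le _ _
        rw [norm_sub_rev c x]; linarith
      have hPc : 0 < ‖∏ x ∈ S, (c - x) ^ m x‖ := by
        rw [norm_pos_iff]
        intro h; exact hfc (by rw [hfg, h, zero_mul])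
      set A := ‖∏ x ∈ S, (c - x) ^ m x‖
      set B := ‖∏ x ∈ S, (z - x) ^ m x‖
      have h5 : A * ‖g z‖ ≤ A * (M * ‖g c‖) := by
        calc A * ‖g z‖ ≤ B * ‖g z‖ := by gcongr
          _ ≤ _ := h1
          _ = _ := by ring
      exact le_of_mul_le_mul_left h5 hPc
    have hball : ∀ z ∈ Metric.ball c (R / 2), ‖g z‖ ≤ M * ‖g c‖ := by
      intro z hz
      refine Complex.norm_le_of_forall_mem_frontier_norm_le (U := Metric.ball c R)
        Metric.isBounded_ball hg.diffContOnCl ?_ ?_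
      · rw [frontier_ball c hR.ne']; exact hsph
      · exact subset_closure (Metric.ball_subset_ball (by linarith) hz)
    intro z hz hfz
    have hzS : ∀ x ∈ S, z - x ≠ 0 := by
      intro x hx h
      rw [sub_eq_zero] at h
      exact hfz (h ▸ ((hmem x).1 hx).2)
    have hlog : deriv f z / f z = ∑ ρ ∈ S, (m ρ : ℂ) / (z - ρ) + deriv g z / g z := by
      have hfun : f = fun z => (∏ ρ ∈ S, (z - ρ) ^ m ρ) * g z := funext hfg
      change logDeriv f z = _ + logDeriv g z
      rw [hfun, logDeriv_mul]
      · congr 1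
        rw [logDeriv_prod]
        · refine Finset.sum_congr rfl fun x hx => ?_
          rw [logDeriv_fun_pow (by fun_prop), logDeriv_apply]
          simp [div_eq_mul_inv]
        · exact fun x hx => pow_ne_zero _ (hzS x hx)
        · intro x hx; fun_prop
      · exact Finset.prod_ne_zero_iff.2 fun x hx => pow_ne_zero _ (hzS x hx)
      · exact hg0 z (by linarith)
      · fun_prop
      · exact hg z
    rw [hlog, add_sub_cancel_left]
    exact logderiv_nonvanishing hg hR hM (fun w hw => hg0 w (by
      simp [dist_eq_norm] at hw; linarith)) hball hz

noncomputable def phiFr (x : ℝ) : ℂ := (Set.Ioi (1:ℝ)).indicator (fun x => ((x - ⌊x⌋₊ : ℝ) : ℂ)) x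

lemma phiFr_norm_le (x : ℝ) : ‖phiFr x‖ ≤ 1 := by
  unfold phiFr
  by_cases hx : x ∈ Set.Ioi (1:ℝ)
  · rw [Set.indicator_of_mem hx, Complex.norm_real, Real.norm_eq_abs, abs_le]
    have h0 : (0:ℝ) ≤ x := by have : (1:ℝ) < x := hx; linarith
    have h1 := Nat.floor_le h0
    have h2 := Nat.lt_floor_add_one x
    constructor <;> linarith
  · rw [Set.indicator_of_notMem hx]; simp

lemma phiFr_measurable : Measurable phiFr := by
  unfold phiFr
  refine Measurable.indicator ?_ measurableSet_Ioi
  refine Complex.measurable_ofReal.comp (measurable_id.sub ?_)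
  exact measurable_from_nat.comp Nat.measurable_floor

lemma phiFr_mellin (s : ℂ) :
    mellin phiFr (-s) = ∫ t in Set.Ioi (1:ℝ), (t:ℂ) ^ (-s - 1) * ((t - ⌊t⌋₊ : ℝ) : ℂ) := by
  unfold mellin
  have : (fun t : ℝ => (t:ℂ) ^ (-s - 1) • phiFr t) = (Set.Ioi (1:ℝ)).indicator
      (fun t : ℝ => (t:ℂ) ^ (-s - 1) * ((t - ⌊t⌋₊ : ℝ) : ℂ)) := by
    ext t
    unfold phiFr
    by_cases hx : t ∈ Set.Ioi (1:ℝ)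
    · rw [Set.indicator_of_mem hx, Set.indicator_of_mem hx, smul_eq_mul]
    · rw [Set.indicator_of_notMem hx, Set.indicator_of_notMem hx, smul_zero]
  rw [this, MeasureTheory.setIntegral_indicator measurableSet_Ioi]
  congr 2
  ext x; simp

lemma phiFr_mellin_diff {s : ℂ} (hs : 0 < s.re) :
    DifferentiableAt ℂ (fun s => mellin phiFr (-s)) s := by
  have : DifferentiableAt ℂ (mellin phiFr) (-s) := by
    refine mellin_differentiableAt_of_isBigO_rpow (a := 0) (b := -s.re - 1) ?_ ?_ (by simpa using hs)
      ?_ (by simp)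
    · have h : MeasureTheory.LocallyIntegrable phiFr :=
        (MeasureTheory.locallyIntegrable_const (1:ℝ)).mono phiFr_measurable.aestronglyMeasurable
          (Filter.Eventually.of_forall fun x => by simpa using phiFr_norm_le x)
      exact h.locallyIntegrableOn _
    · refine Asymptotics.IsBigO.of_bound 1 (Filter.Eventually.of_forall fun x => ?_)
      simpa using phiFr_norm_le x
    · refine Asymptotics.IsBigO.of_bound 1 ?_
      have : Set.Ioo (0:ℝ) 1 ∈ nhdsWithin (0:ℝ) (Set.Ioi 0) := Ioo_mem_nhdsGT one_pos
      filter_upwards [this] with x hx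
      have : phiFr x = 0 := Set.indicator_of_notMem (by simpa using hx.2.le) _
      rw [this]; simp
  exact this.comp s (by fun_prop)

lemma phiFr_mellin_bound {s : ℂ} (hs : 1 / 2 ≤ s.re) : ‖mellin phiFr (-s)‖ ≤ 2 := by
  rw [phiFr_mellin]
  have hlt : (-s.re - 1) < -1 := by linarith
  calc _ ≤ ∫ t in Set.Ioi (1:ℝ), t ^ (-s.re - 1) := by
        refine MeasureTheory.norm_integral_le_of_norm_le
          (integrableOn_Ioi_rpow_of_lt hlt one_pos) ?_
        rw [MeasureTheory.ae_restrict_iff' measurableSet_Ioi]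
        refine Filter.Eventually.of_forall fun t ht => ?_
        have h1 : (1:ℝ) < t := ht
        have h0 : (0:ℝ) < t := by linarith
        have h2 := phiFr_norm_le t
        unfold phiFr at h2
        rw [Set.indicator_of_mem ht] at h2
        rw [norm_mul, Complex.norm_cpow_eq_rpow_re_of_pos h0]
        simp only [sub_re, neg_re, one_re]
        exact mul_le_of_le_one_right (Real.rpow_nonneg h0.le _) h2
    _ = 1 / s.re := by
        rw [integral_Ioi_rpow_of_lt hlt one_pos, Real.one_rpow]
        rw [show -s.re - 1 + 1 = -s.re by ring, neg_div_neg_eq]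
    _ ≤ 2 := by
        rw [div_le_iff₀ (by linarith)]; linarith

lemma zeta1_of_one_lt {s : ℂ} (hs : 1 < s.re) :
    riemannZeta₁ s = s - s * (s - 1) * mellin phiFr (-s) := by
  have hs1 : s ≠ 1 := by rintro rfl; simp at hs
  have hs0 : s ≠ 0 := by rintro rfl; simp at hs; linarith
  have h1 := LSeries_eq_mul_integral' (1 : ℕ → ℂ) (r := 1) zero_le_one hs (by
    simp only [Pi.one_apply, norm_one, Finset.sum_const, Nat.card_Icc, Real.rpow_one]
    simpa using Asymptotics.isBigO_refl _ _)
  rw [LSeries_one_eq_riemannZeta hs] at h1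
  have h2 : (∫ t in Set.Ioi (1:ℝ), (t:ℂ) ^ (-s)) = 1 / (s - 1) := by
    rw [integral_Ioi_cpow_of_lt (by simpa using hs) one_pos]
    have : s - 1 ≠ 0 := sub_ne_zero.2 hs1
    have h' : -s + 1 ≠ 0 := by intro h; apply this; linear_combination -h
    simp
    field_simp
    ring
  have hcongr : Set.EqOn (fun t : ℝ => (t:ℂ) ^ (-s - 1) * ((t - ⌊t⌋₊ : ℝ) : ℂ))
      (fun t : ℝ => (t:ℂ) ^ (-s) - (∑ k ∈ Finset.Icc 1 ⌊t⌋₊, (1 : ℕ → ℂ) k) * t ^ (-(s + 1)))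
      (Set.Ioi (1:ℝ)) := by
    intro t ht
    have h1 : (1:ℝ) < t := ht
    have ht0 : (t:ℂ) ≠ 0 := by
      rw [Complex.ofReal_ne_zero]; linarith
    simp only [Pi.one_apply, Finset.sum_const, Nat.card_Icc, nsmul_eq_mul, mul_one]
    have e1 : (t:ℂ) ^ (-s) = (t:ℂ) ^ (-s - 1) * t := by
      conv_lhs => rw [show -s = (-s - 1) + 1 by ring, Complex.cpow_add _ _ ht0, Complex.cpow_one]
    rw [e1, show -(s + 1) = -s - 1 by ring]
    push_cast
    ring
  have hi1 : MeasureTheory.IntegrableOn (fun t : ℝ => (t:ℂ) ^ (-s)) (Set.Ioi (1:ℝ)) :=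
    integrableOn_Ioi_cpow_of_lt (by simpa using hs) one_pos
  have hi0 : MeasureTheory.IntegrableOn
      (fun t : ℝ => (t:ℂ) ^ (-s - 1) * ((t - ⌊t⌋₊ : ℝ) : ℂ)) (Set.Ioi (1:ℝ)) := by
    have hI : MeasureTheory.IntegrableOn (fun t : ℝ => (t:ℂ) ^ (-s - 1)) (Set.Ioi (1:ℝ)) :=
      integrableOn_Ioi_cpow_of_lt (by simp; linarith) one_pos
    refine MeasureTheory.Integrable.mul_bdd (c := 1) hI ?_ ?_
    · refine (Complex.measurable_ofReal.comp (measurable_id.sub ?_)).aestronglyMeasurable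
      exact measurable_from_nat.comp Nat.measurable_floor
    · rw [MeasureTheory.ae_restrict_iff' measurableSet_Ioi]
      refine Filter.Eventually.of_forall fun t ht => ?_
      have h2 := phiFr_norm_le t
      unfold phiFr at h2
      rwa [Set.indicator_of_mem ht] at h2
  have hi2 : MeasureTheory.IntegrableOn
      (fun t : ℝ => (∑ k ∈ Finset.Icc 1 ⌊t⌋₊, (1 : ℕ → ℂ) k) * (t:ℂ) ^ (-(s + 1)))
      (Set.Ioi (1:ℝ)) := by
    refine (hi1.sub hi0).congr ?_
    rw [Filter.EventuallyEq, MeasureTheory.ae_restrict_iff' measurableSet_Ioi]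
    refine Filter.Eventually.of_forall fun t ht => ?_
    have := hcongr ht
    simp only at this
    simp only [Pi.sub_apply]
    rw [this]; ring
  rw [phiFr_mellin, MeasureTheory.setIntegral_congr_fun measurableSet_Ioi hcongr,
    MeasureTheory.integral_sub hi1 hi2, h2]
  set J := ∫ t in Set.Ioi (1:ℝ), (∑ k ∈ Finset.Icc 1 ⌊t⌋₊, (1 : ℕ → ℂ) k) * (t:ℂ) ^ (-(s + 1))
  have h3 := riemannZeta_eq_inv_sub_mul hs1
  have : s - 1 ≠ 0 := sub_ne_zero.2 hs1
  rw [h1] at h3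
  field_simp at h3 ⊢
  linear_combination -h3

lemma zeta1_formula {s : ℂ} (hs : 0 < s.re) :
    riemannZeta₁ s = s - s * (s - 1) * mellin phiFr (-s) := by
  have hU : IsOpen {s : ℂ | 0 < s.re} := isOpen_lt continuous_const Complex.continuous_re
  have hpre : IsPreconnected {s : ℂ | 0 < s.re} :=
    (convex_halfSpace_re_gt 0).isPreconnected
  have h1 : AnalyticOnNhd ℂ riemannZeta₁ {s : ℂ | 0 < s.re} :=
    fun z _ => differentiable_riemannZeta₁.analyticAt z
  have h2 : AnalyticOnNhd ℂ (fun s => s - s * (s - 1) * mellin phiFr (-s)) {s : ℂ | 0 < s.re} := by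
    refine DifferentiableOn.analyticOnNhd (fun z hz => ?_) hU
    have := phiFr_mellin_diff hz
    exact DifferentiableAt.differentiableWithinAt (by fun_prop)
  refine h1.eqOn_of_preconnected_of_eventuallyEq h2 hpre (z₀ := 2) (by simp) ?_ hs
  have : {s : ℂ | 1 < s.re} ∈ nhds (2:ℂ) :=
    (isOpen_lt continuous_const Complex.continuous_re).mem_nhds (by simp)
  filter_upwards [this] with z hz using zeta1_of_one_lt hz

lemma zeta1_growth {s : ℂ} (hs : 1 / 2 ≤ s.re) : ‖riemannZeta₁ s‖ ≤ 3 * (‖s‖ + 1) ^ 2 := by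
  rw [zeta1_formula (by linarith)]
  have h1 := phiFr_mellin_bound hs
  have h2 : ‖s - 1‖ ≤ ‖s‖ + 1 := by simpa using norm_sub_le s 1
  have h3 := norm_nonneg s
  calc _ ≤ ‖s‖ + ‖s * (s - 1) * mellin phiFr (-s)‖ := norm_sub_le _ _
    _ = ‖s‖ + ‖s‖ * ‖s - 1‖ * ‖mellin phiFr (-s)‖ := by rw [norm_mul, norm_mul]
    _ ≤ ‖s‖ + ‖s‖ * (‖s‖ + 1) * 2 := by gcongr
    _ ≤ _ := by nlinarith
section
open scoped ArithmeticFunction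

lemma zeta1_ne {s : ℂ} (hs : 1 ≤ s.re) : riemannZeta₁ s ≠ 0 := by
  by_cases h : s = 1
  · rw [h]; simp
  · have h1 := riemannZeta_ne_zero_of_one_le_re hs
    rw [riemannZeta_eq_inv_sub_mul h] at h1
    exact (mul_ne_zero_iff.1 h1).2

lemma zeta_logderiv {s : ℂ} (hs : s ≠ 1) (h : riemannZeta₁ s ≠ 0) :
    deriv riemannZeta s / riemannZeta s =
      -(s - 1)⁻¹ + deriv riemannZeta₁ s / riemannZeta₁ s := by
  grind [deriv_riemannZeta_eq_neg_inv_sub_sq_mul_add, riemannZeta_eq_inv_sub_mul]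

lemma vm_eq {s : ℂ} (hs : 1 < s.re) :
    LSeries (fun n : ℕ => (ArithmeticFunction.vonMangoldt n : ℂ)) s = (s - 1)⁻¹ - deriv riemannZeta₁ s / riemannZeta₁ s := by
  rw [ArithmeticFunction.LSeries_vonMangoldt_eq_deriv_riemannZeta_div hs, neg_div,
    zeta_logderiv (by rintro rfl; simp at hs) (zeta1_ne hs.le)]
  ring

lemma vm_term_norm (σ t : ℝ) (n : ℕ) :
    ‖LSeries.term (fun n : ℕ => (ArithmeticFunction.vonMangoldt n : ℂ)) (σ + t * I) n‖ = (LSeries.term (fun n : ℕ => (ArithmeticFunction.vonMangoldt n : ℂ)) (σ : ℂ) n).re := by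
  rcases eq_or_ne n 0 with rfl | hn
  · simp
  · rw [LSeries.term_of_ne_zero hn, LSeries.term_of_ne_zero hn, norm_div,
      Complex.norm_natCast_cpow_of_pos (Nat.pos_of_ne_zero hn)]
    rw [show ((n:ℂ) ^ (σ:ℂ)) = (((n:ℝ) ^ σ : ℝ) : ℂ) by
      rw [Complex.ofReal_cpow (Nat.cast_nonneg n)]; simp]
    rw [← Complex.ofReal_div, Complex.ofReal_re, Complex.norm_real,
      Real.norm_of_nonneg ArithmeticFunction.vonMangoldt_nonneg]
    simp

lemma vm_norm_le {σ : ℝ} (hσ : 1 < σ) (t : ℝ) :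
    ‖LSeries (fun n : ℕ => (ArithmeticFunction.vonMangoldt n : ℂ)) (σ + t * I)‖ ≤ (LSeries (fun n : ℕ => (ArithmeticFunction.vonMangoldt n : ℂ)) (σ : ℂ)).re := by
  have h1 : LSeriesSummable (fun n : ℕ => (ArithmeticFunction.vonMangoldt n : ℂ)) (σ + t * I) :=
    ArithmeticFunction.LSeriesSummable_vonMangoldt (by simpa using hσ)
  have h2 : LSeriesSummable (fun n : ℕ => (ArithmeticFunction.vonMangoldt n : ℂ)) (σ : ℂ) :=
    ArithmeticFunction.LSeriesSummable_vonMangoldt (by simpa using hσ)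
  unfold LSeries
  rw [Complex.re_tsum h2]
  refine (norm_tsum_le_tsum_norm h1.norm).trans (le_of_eq ?_)
  exact tsum_congr fun n => vm_term_norm σ t n

lemma vm_341 {σ : ℝ} (hσ : 1 < σ) (t : ℝ) :
    0 ≤ 3 * (LSeries (fun n : ℕ => (ArithmeticFunction.vonMangoldt n : ℂ)) (σ : ℂ)).re + 4 * (LSeries (fun n : ℕ => (ArithmeticFunction.vonMangoldt n : ℂ)) (σ + t * I)).re
      + (LSeries (fun n : ℕ => (ArithmeticFunction.vonMangoldt n : ℂ)) (σ + (2 * t : ℝ) * I)).re := by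
  have h1 : ∀ t : ℝ, LSeriesSummable (fun n : ℕ => (ArithmeticFunction.vonMangoldt n : ℂ)) (σ + t * I) := fun t =>
    ArithmeticFunction.LSeriesSummable_vonMangoldt (by simpa using hσ)
  have h2 : LSeriesSummable (fun n : ℕ => (ArithmeticFunction.vonMangoldt n : ℂ)) (σ : ℂ) :=
    ArithmeticFunction.LSeriesSummable_vonMangoldt (by simpa using hσ)
  unfold LSeries
  rw [Complex.re_tsum h2, Complex.re_tsum (h1 _), Complex.re_tsum (h1 _), ← tsum_mul_left,
    ← tsum_mul_left]
  have s0 := (Complex.reCLM.summable h2).mul_left 3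
  have s1 := (Complex.reCLM.summable (h1 t)).mul_left 4
  have s2 := Complex.reCLM.summable (h1 (2 * t))
  simp only [Complex.reCLM_apply] at s0 s1 s2
  rw [← s0.tsum_add s1, ← (s0.add s1).tsum_add s2]
  refine tsum_nonneg fun n => ?_
  rcases eq_or_ne n 0 with rfl | hn
  · simp
  have hn' : (n:ℂ) ≠ 0 := by exact_mod_cast hn
  have hnp : (0:ℝ) < n := by exact_mod_cast Nat.pos_of_ne_zero hn
  set u : ℂ := (n:ℂ) ^ (-(t * I)) with hu
  have hun : ‖u‖ = 1 := by
    rw [hu, Complex.norm_natCast_cpow_of_pos (Nat.pos_of_ne_zero hn)]; simp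
  set a : ℝ := Λ n / (n:ℝ) ^ σ with ha
  have ha0 : 0 ≤ a := div_nonneg ArithmeticFunction.vonMangoldt_nonneg (Real.rpow_nonneg hnp.le _)
  have hr : ((n:ℂ) ^ (σ:ℂ)) = (((n:ℝ) ^ σ : ℝ) : ℂ) := by
      rw [Complex.ofReal_cpow (Nat.cast_nonneg n)]; simp
  have e0 : LSeries.term (fun n : ℕ => (ArithmeticFunction.vonMangoldt n : ℂ)) (σ : ℂ) n = a := by
    rw [LSeries.term_of_ne_zero hn, hr, ha]; push_cast; rfl
  have e1 : LSeries.term (fun n : ℕ => (ArithmeticFunction.vonMangoldt n : ℂ)) (σ + t * I) n = a * u := by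
    rw [LSeries.term_of_ne_zero hn, Complex.cpow_add _ _ hn', hr, ha, hu, Complex.cpow_neg]
    push_cast
    field_simp
  have e2 : LSeries.term (fun n : ℕ => (ArithmeticFunction.vonMangoldt n : ℂ)) (σ + (2 * t : ℝ) * I) n = a * (u * u) := by
    rw [LSeries.term_of_ne_zero hn, show ((2 * t : ℝ) : ℂ) * I = t * I + t * I by push_cast; ring,
      Complex.cpow_add _ _ hn', Complex.cpow_add _ _ hn', hr, ha, hu, Complex.cpow_neg]
    push_cast
    field_simp
  rw [e0, e1, e2, Complex.re_ofReal_mul, Complex.re_ofReal_mul, Complex.ofReal_re, Complex.mul_re]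
  have h4 : u.re * u.re + u.im * u.im = 1 := by
    have := Complex.normSq_eq_norm_sq u
    rw [hun, Complex.normSq_apply] at this
    linarith
  have : 3 * a + 4 * (a * u.re) + a * (u.re * u.re - u.im * u.im) = a * (2 * (1 + u.re) ^ 2) := by
    linear_combination (-a) * h4
  rw [this]; positivity

lemma vm_real_bound : ∃ C0 : ℝ, 0 ≤ C0 ∧ ∀ σ : ℝ, 1 < σ → σ ≤ 17 / 16 →
    (LSeries (fun n : ℕ => (ArithmeticFunction.vonMangoldt n : ℂ)) (σ : ℂ)).re ≤ 1 / (σ - 1) + C0 := by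
  have hcont : ContinuousOn (fun σ : ℝ => deriv riemannZeta₁ σ / riemannZeta₁ σ)
      (Set.Icc 1 (17 / 16)) := by
    refine ContinuousOn.div ?_ ?_ fun σ hσ => zeta1_ne (by simpa using hσ.1)
    · exact (differentiable_riemannZeta₁.deriv.continuous.comp continuous_ofReal).continuousOn
    · exact (differentiable_riemannZeta₁.continuous.comp continuous_ofReal).continuousOn
  obtain ⟨C, hC⟩ := isCompact_Icc.exists_bound_of_continuousOn hcont
  refine ⟨max C 0, le_max_right _ _, fun σ h1 h2 => ?_⟩
  rw [vm_eq (by simpa using h1), Complex.sub_re]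
  have h3 := hC σ ⟨h1.le, h2⟩
  have h4 := (abs_le.1 ((Complex.abs_re_le_norm _).trans h3)).1
  have h5 : ((σ:ℂ) - 1)⁻¹.re = 1 / (σ - 1) := by
    rw [show ((σ:ℂ) - 1)⁻¹ = (((σ - 1)⁻¹ : ℝ) : ℂ) by push_cast; rfl, Complex.ofReal_re]; simp
  rw [h5]
  have := le_max_left C 0
  linarith

lemma zeta1_lower : ∃ K : ℝ, 1 ≤ K ∧ ∀ t : ℝ, 1 ≤ |t| →
    1 ≤ K * ‖riemannZeta₁ (17 / 16 + t * I)‖ := by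
  refine ⟨max 1 (∑' n : ℕ, ‖LSeries.term (1 : ℕ → ℂ) (17 / 16 : ℂ) n‖), le_max_left _ _,
    fun t ht => ?_⟩
  set s : ℂ := 17 / 16 + t * I with hs
  have hre : s.re = 17 / 16 := by simp [hs]
  have him : s.im = t := by simp [hs]
  have h1 : 1 < s.re := by rw [hre]; norm_num
  have hs1 : s ≠ 1 := by intro h; rw [h] at h1; simp at h1
  have h2 := LSeries_one_mul_Lseries_moebius h1
  rw [LSeries_one_eq_riemannZeta h1] at h2
  have hsum : Summable fun n => ‖LSeries.term (1 : ℕ → ℂ) (17 / 16 : ℂ) n‖ :=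
    ((LSeriesSummable_one_iff (s := (17 / 16 : ℂ))).2 (by norm_num)).norm
  have hmu : ‖LSeries (fun n : ℕ => (ArithmeticFunction.moebius n : ℂ)) s‖
      ≤ ∑' n : ℕ, ‖LSeries.term (1 : ℕ → ℂ) (17 / 16 : ℂ) n‖ := by
    have hle : ∀ n, ‖LSeries.term (fun n : ℕ => (ArithmeticFunction.moebius n : ℂ)) s n‖
        ≤ ‖LSeries.term (1 : ℕ → ℂ) (17 / 16 : ℂ) n‖ := by
      intro n
      rcases eq_or_ne n 0 with rfl | hn
      · simp
      · rw [LSeries.term_of_ne_zero hn, LSeries.term_of_ne_zero hn, norm_div, norm_div,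
          Complex.norm_natCast_cpow_of_pos (Nat.pos_of_ne_zero hn),
          Complex.norm_natCast_cpow_of_pos (Nat.pos_of_ne_zero hn), hre]
        have : (17 / 16 : ℂ).re = 17 / 16 := by norm_num
        rw [this]
        gcongr
        have := ArithmeticFunction.abs_moebius_le_one (n := n)
        simp only [Complex.norm_intCast, Pi.one_apply, norm_one]
        exact_mod_cast this
    unfold LSeries
    exact (norm_tsum_le_tsum_norm (hsum.of_nonneg_of_le (fun _ => norm_nonneg _) hle)).trans
      ((hsum.of_nonneg_of_le (fun _ => norm_nonneg _) hle).tsum_le_tsum hle hsum)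
  have h3 : ‖riemannZeta s‖ ≤ ‖riemannZeta₁ s‖ := by
    rw [riemannZeta_eq_inv_sub_mul hs1, norm_mul, norm_inv]
    refine mul_le_of_le_one_left (norm_nonneg _) (inv_le_one_of_one_le₀ ?_)
    have := Complex.abs_im_le_norm (s - 1)
    simp [him] at this
    linarith
  have h4 := congrArg norm h2
  rw [norm_mul, norm_one] at h4
  rw [← h4, mul_comm (max _ _)]
  gcongr
  exact hmu.trans (le_max_right _ _)

end


lemma log3_ge_one {t : ℝ} (ht : 1 ≤ |t|) : 1 ≤ Real.log (|t| + 2) := by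
  rw [Real.le_log_iff_exp_le (by positivity)]
  have := Real.exp_one_lt_d9
  linarith

lemma local_zeros : ∃ C : ℝ, 1 ≤ C ∧ ∀ t : ℝ, 1 ≤ |t| →
    ∃ (S : Finset ℂ) (m : ℂ → ℕ),
      (∀ ρ ∈ S, riemannZeta₁ ρ = 0 ∧ ‖ρ - (17 / 16 + t * I)‖ ≤ 1 / 4) ∧
      (∀ ρ, ‖ρ - (17 / 16 + t * I)‖ ≤ 1 / 4 → riemannZeta₁ ρ = 0 → ρ ∈ S ∧ 1 ≤ m ρ) ∧
      ∀ z, ‖z - (17 / 16 + t * I)‖ ≤ 1 / 8 → riemannZeta₁ z ≠ 0 →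
        ‖deriv riemannZeta₁ z / riemannZeta₁ z - ∑ ρ ∈ S, (m ρ : ℂ) / (z - ρ)‖
          ≤ C * Real.log (|t| + 2) := by
  obtain ⟨K, hK, hlow⟩ := zeta1_lower
  have hlK : 0 ≤ Real.log (12 * K) := Real.log_nonneg (by linarith)
  refine ⟨96 * (Real.log (12 * K) + 2), by linarith, fun t ht => ?_⟩
  set c : ℂ := 17 / 16 + t * I with hc
  have hre : c.re = 17 / 16 := by simp [hc]
  have hM : 1 < 12 * K * (|t| + 2) ^ 2 := by nlinarith
  have hbd : ∀ z, ‖z - c‖ = 1 / 2 → ‖riemannZeta₁ z‖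
      ≤ 12 * K * (|t| + 2) ^ 2 * ‖riemannZeta₁ c‖ := by
    intro z hz
    have h1 := Complex.abs_re_le_norm (z - c)
    rw [hz, Complex.sub_re, hre] at h1
    have h2 : 1 / 2 ≤ z.re := by have := (abs_le.1 h1).1; linarith
    have h3 := zeta1_growth h2
    have h4 : ‖z‖ ≤ |t| + 2 := by
      have : z = (z - c) + ((17 / 16 : ℝ) + t * I) := by rw [hc]; push_cast; ring
      rw [this]
      refine (norm_add_le _ _).trans ?_
      have h5 : ‖((17 / 16 : ℝ) + t * I : ℂ)‖ ≤ 17 / 16 + |t| := by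
        refine (norm_add_le _ _).trans ?_
        rw [Complex.norm_real, norm_mul, Complex.norm_real]
        simp
      linarith
    have h6 := hlow t ht
    calc _ ≤ 3 * (‖z‖ + 1) ^ 2 := h3
      _ ≤ 3 * ((|t| + 2) + (|t| + 2)) ^ 2 := by gcongr; linarith
      _ = 12 * (|t| + 2) ^ 2 * 1 := by ring
      _ ≤ 12 * (|t| + 2) ^ 2 * (K * ‖riemannZeta₁ c‖) := by gcongr
      _ = _ := by ring
  obtain ⟨S, m, hS1, hS2, hS3⟩ := landau differentiable_riemannZeta₁ (c := c) (R := 1 / 2)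
    (by norm_num) hM (zeta1_ne (by rw [hre]; norm_num)) hbd
  refine ⟨S, m, fun ρ hρ => ⟨(hS1 ρ hρ).1, (hS1 ρ hρ).2.trans (by norm_num)⟩,
    fun ρ h1 h2 => hS2 ρ (h1.trans (by norm_num)) h2, fun z h1 h2 => ?_⟩
  refine (hS3 z (h1.trans (by norm_num)) h2).trans ?_
  rw [Real.log_mul (by positivity) (by positivity), Real.log_pow]
  have := log3_ge_one ht
  push_cast
  nlinarith

lemma re_inv_nonneg {w : ℂ} (hw : 0 ≤ w.re) (m : ℕ) : 0 ≤ ((m : ℂ) / w).re := by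
  rw [div_eq_mul_inv, ← Complex.ofReal_natCast, Complex.re_ofReal_mul, Complex.inv_re]
  have := Complex.normSq_nonneg w
  positivity

lemma zeta1_zero_re {ρ : ℂ} (h : riemannZeta₁ ρ = 0) : ρ.re < 1 := by
  by_contra hc
  exact zeta1_ne (not_lt.1 hc) h

lemma c_dist {σ t : ℝ} (h1 : 1 ≤ σ) (h2 : σ ≤ 17 / 16) :
    ‖(σ + t * I : ℂ) - (17 / 16 + t * I)‖ ≤ 1 / 16 := by
  have : (σ + t * I : ℂ) - (17 / 16 + t * I) = ((σ - 17 / 16 : ℝ) : ℂ) := by push_cast; ring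
  rw [this, Complex.norm_real, Real.norm_eq_abs, abs_le]
  constructor <;> linarith

lemma inv_im_le {s : ℂ} (h : 1 ≤ |s.im|) : ‖(s - 1)⁻¹‖ ≤ 1 := by
  rw [norm_inv]
  refine inv_le_one_of_one_le₀ ?_
  have := Complex.abs_im_le_norm (s - 1)
  simp at this
  linarith

lemma log_shift {t u : ℝ} (h : |u| ≤ 2 * |t|) :
    Real.log (|u| + 2) ≤ 2 * Real.log (|t| + 2) := by
  have h0 := abs_nonneg t
  have h1 := abs_nonneg u
  rw [← Real.log_rpow (by positivity)]
  refine Real.log_le_log (by positivity) ?_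
  have : (|t| + 2) ^ (2:ℝ) = (|t| + 2) ^ 2 := by norm_cast
  rw [this]; nlinarith

lemma zero_free : ∃ c : ℝ, 0 < c ∧ c ≤ 1 / 32 ∧ ∀ ρ : ℂ, 1 ≤ |ρ.im| → riemannZeta₁ ρ = 0 →
    ρ.re ≤ 1 - c / Real.log (|ρ.im| + 2) := by
  obtain ⟨C, hC, hloc⟩ := local_zeros
  obtain ⟨C0, hC0, hreal⟩ := vm_real_bound
  -- total constant
  set D : ℝ := 3 * C0 + 6 * C + 5 + 8 with hD
  have hDpos : 0 < D := by positivity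
  refine ⟨1 / (14 * D), by positivity, ?_, ?_⟩
  · rw [div_le_iff₀ (by positivity)]; linarith
  intro ρ him hρ
  set t := ρ.im with ht
  set ℓ := Real.log (|t| + 2) with hℓ
  have hℓ1 : 1 ≤ ℓ := log3_ge_one him
  have hDℓ : D ≤ D * ℓ := le_mul_of_one_le_right hDpos.le hℓ1
  by_contra hcon
  push Not at hcon
  have hρ1 := zeta1_zero_re hρ
  set x : ℝ := 1 / (2 * D * ℓ) with hx
  have hxpos : 0 < x := by positivity
  have hx16 : x ≤ 1 / 16 := by
    rw [hx]; apply one_div_le_one_div_of_le <;> linarith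
  set y : ℝ := 1 - ρ.re with hy
  have hy0 : 0 < y := by linarith
  have hylt : y < 1 / (14 * D * ℓ) := by
    rw [div_div] at hcon; linarith
  have hy16 : y ≤ 1 / 16 := by
    refine hylt.le.trans (one_div_le_one_div_of_le (by norm_num) ?_); linarith
  set σ := 1 + x with hσ
  have hσ1 : 1 < σ := by linarith
  have hσ2 : σ ≤ 17 / 16 := by linarith
  have h341 := vm_341 hσ1 t
  have hr := hreal σ hσ1 hσ2
  have him2 : 1 ≤ |2 * t| := by rw [abs_mul]; norm_num; linarith
  -- bound at twice the height
  have hb2 : (LSeries (fun n : ℕ => (ArithmeticFunction.vonMangoldt n : ℂ)) (σ + (2 * t : ℝ) * I)).re ≤ 1 + 2 * C * ℓ := by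
    obtain ⟨S, m, hS1, hS2, hS3⟩ := hloc (2 * t) him2
    set s : ℂ := σ + (2 * t : ℝ) * I with hs
    have hsre : s.re = σ := by simp [hs]
    have hsim : s.im = 2 * t := by simp [hs]
    rw [vm_eq (by rw [hsre]; exact hσ1), Complex.sub_re]
    have h1 := hS3 s ((c_dist hσ1.le hσ2).trans (by norm_num)) (zeta1_ne (by rw [hsre]; exact hσ1.le))
    have h2 := (abs_le.1 ((Complex.abs_re_le_norm _).trans h1)).1
    rw [Complex.sub_re, Complex.re_sum] at h2
    have h3 : 0 ≤ ∑ ρ ∈ S, ((m ρ : ℂ) / (s - ρ)).re := by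
      refine Finset.sum_nonneg fun z hz => re_inv_nonneg ?_ _
      have := zeta1_zero_re (hS1 z hz).1
      rw [Complex.sub_re, hsre]; linarith
    have h4 := (abs_le.1 ((Complex.abs_re_le_norm _).trans
      (inv_im_le (s := s) (by rw [hsim]; exact him2)))).2
    have h5 : Real.log (|2 * t| + 2) ≤ 2 * ℓ := log_shift (by rw [abs_mul]; norm_num)
    have h6 : C * Real.log (|2 * t| + 2) ≤ C * (2 * ℓ) := by gcongr
    linarith
  have hb1 : (LSeries (fun n : ℕ => (ArithmeticFunction.vonMangoldt n : ℂ)) (σ + t * I)).re ≤ 1 + C * ℓ - 1 / (x + y) := by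
    obtain ⟨S, m, hS1, hS2, hS3⟩ := hloc t him
    set s : ℂ := σ + t * I with hs
    have hsre : s.re = σ := by simp [hs]
    have hsim : s.im = t := by simp [hs]
    rw [vm_eq (by rw [hsre]; exact hσ1), Complex.sub_re]
    have h1 := hS3 s ((c_dist hσ1.le hσ2).trans (by norm_num)) (zeta1_ne (by rw [hsre]; exact hσ1.le))
    have h2 := (abs_le.1 ((Complex.abs_re_le_norm _).trans h1)).1
    rw [Complex.sub_re, Complex.re_sum] at h2
    have hρc : ‖ρ - (17 / 16 + t * I)‖ ≤ 1 / 4 := by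
      have : ρ - (17 / 16 + t * I) = ((-(y + 1 / 16) : ℝ) : ℂ) := by
        apply Complex.ext <;> simp [hy, ht]
        ring
      rw [this, Complex.norm_real, Real.norm_eq_abs, abs_neg, abs_of_pos (by positivity)]
      linarith
    obtain ⟨hρS, hmρ⟩ := hS2 ρ hρc hρ
    have hsr : s - ρ = ((x + y : ℝ) : ℂ) := by
      apply Complex.ext <;> simp [hs, hy, hσ, ht]
      ring
    have h3 : 1 / (x + y) ≤ ∑ ρ ∈ S, ((m ρ : ℂ) / (s - ρ)).re := by
      calc 1 / (x + y) ≤ ((m ρ : ℂ) / (s - ρ)).re := by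
            rw [hsr, ← Complex.ofReal_natCast, ← Complex.ofReal_div, Complex.ofReal_re]
            gcongr
            exact_mod_cast hmρ
        _ ≤ _ := by
            refine Finset.single_le_sum (f := fun ρ => ((m ρ : ℂ) / (s - ρ)).re)
              (fun z hz => re_inv_nonneg ?_ _) hρS
            have := zeta1_zero_re (hS1 z hz).1
            rw [Complex.sub_re, hsre]; linarith
    have h4 := (abs_le.1 ((Complex.abs_re_le_norm _).trans
      (inv_im_le (s := s) (by rw [hsim]; exact him)))).2
    linarith
  have hfin : 4 / (x + y) ≤ 3 / x + D * ℓ := by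
    have e1 : σ - 1 = x := by simp [hσ]
    rw [e1] at hr
    have e2 : (4:ℝ) / (x + y) = 4 * (1 / (x + y)) := by ring
    have e3 : (3:ℝ) / x = 3 * (1 / x) := by ring
    rw [e2, e3]
    have e4 : 3 * C0 + 5 + 6 * C * ℓ ≤ D * ℓ := by
      rw [hD]; nlinarith
    linarith
  have e5 : 3 / x = 6 * D * ℓ := by rw [hx]; field_simp; norm_num
  rw [e5, div_le_iff₀ (by positivity)] at hfin
  have e6 : x + y < 1 / (2 * D * ℓ) + 1 / (14 * D * ℓ) := by linarith
  have e7 : (6 * D * ℓ + D * ℓ) * (1 / (2 * D * ℓ) + 1 / (14 * D * ℓ)) = 4 := by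
    field_simp; norm_num
  have e8 : (6 * D * ℓ + D * ℓ) * (x + y)
      < (6 * D * ℓ + D * ℓ) * (1 / (2 * D * ℓ) + 1 / (14 * D * ℓ)) := by gcongr
  linarith

lemma diff_inv {w v : ℂ} {d : ℝ} (hd : 0 < d) (hw : d / 2 ≤ w.re) (hv : 2 * d ≤ v.re)
    (hwv : ‖v - w‖ ≤ 3 * d / 2) (m : ℕ) :
    ‖(m : ℂ) / w - m / v‖ ≤ 3 * ((m : ℂ) / v).re := by
  have hw0 : w ≠ 0 := by
    rintro rfl
    simp at hw; linarith
  have hv0 : v ≠ 0 := by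
    rintro rfl
    simp at hv; linarith
  have hwn : d / 2 ≤ ‖w‖ := hw.trans (Complex.re_le_norm w)
  have hvn : 0 < ‖v‖ := norm_pos_iff.2 hv0
  have hwn' : 0 < ‖w‖ := norm_pos_iff.2 hw0
  have h4 : ‖v‖ ≤ 4 * ‖w‖ := by
    have : ‖v‖ ≤ ‖v - w‖ + ‖w‖ := by
      simpa using norm_add_le (v - w) w
    linarith
  have e1 : (m : ℂ) / w - m / v = m * ((v - w) / (w * v)) := by
    field_simp
  have e2 : ((m : ℂ) / v).re = m * (v.re / ‖v‖ ^ 2) := by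
    rw [div_eq_mul_inv, ← Complex.ofReal_natCast, Complex.re_ofReal_mul, Complex.inv_re,
      Complex.normSq_eq_norm_sq]
  rw [e1, e2, norm_mul, norm_div, norm_mul, Complex.norm_natCast]
  have key : ‖v - w‖ / (‖w‖ * ‖v‖) ≤ 3 * (v.re / ‖v‖ ^ 2) := by
    calc ‖v - w‖ / (‖w‖ * ‖v‖) ≤ (3 * d / 2) / (‖v‖ / 4 * ‖v‖) := by
          gcongr
          linarith
      _ = 3 * ((2 * d) / ‖v‖ ^ 2) := by field_simp; ring
      _ ≤ _ := by gcongr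
  calc _ ≤ (m : ℝ) * (3 * (v.re / ‖v‖ ^ 2)) := by gcongr
    _ = _ := by ring

lemma zeta1_logderiv_bound : ∃ C c : ℝ, 0 < C ∧ 0 < c ∧ ∀ t : ℝ, 2 ≤ |t| → ∀ z : ℂ,
    ‖z - (1 + t * I)‖ ≤ c / Real.log (|t| + 2) →
    riemannZeta₁ z ≠ 0 ∧ ‖deriv riemannZeta₁ z / riemannZeta₁ z‖ ≤ C * Real.log (|t| + 2) := by
  obtain ⟨C, hC, hloc⟩ := local_zeros
  obtain ⟨C0, hC0, hreal⟩ := vm_real_bound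
  obtain ⟨c, hc, hc32, hzf⟩ := zero_free
  refine ⟨C + 4 * ((2 / c + C0 + 1) + C), c / 4, by positivity, by positivity, fun t ht z hz => ?_⟩
  have ht1 : 1 ≤ |t| := by linarith
  obtain ⟨S, m, hS1, hS2, hS3⟩ := hloc t ht1
  have hℓ1 := log3_ge_one ht1
  set ℓ := Real.log (|t| + 2) with hℓ
  have hℓ0 : 0 < ℓ := by linarith
  set d := c / (2 * ℓ) with hd
  have hd0 : 0 < d := by positivity
  have hd64 : d ≤ 1 / 64 := by
    rw [hd, div_le_iff₀ (by positivity)]; linarith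
  have hz' : ‖z - (1 + t * I)‖ ≤ d / 2 := by
    refine hz.trans (le_of_eq ?_); rw [hd]; field_simp; norm_num
  have hzre : |z.re - 1| ≤ d / 2 := by
    have := (Complex.abs_re_le_norm _).trans hz'
    simpa using this
  have hzre := abs_le.1 hzre
  -- zeros are left of 1 - d
  have hleft : ∀ ρ, ‖ρ - (17 / 16 + t * I)‖ ≤ 1 / 4 → riemannZeta₁ ρ = 0 → ρ.re ≤ 1 - d := by
    intro ρ h1 h2
    have h3 : |ρ.im - t| ≤ 1 / 4 := by
      have := (Complex.abs_im_le_norm _).trans h1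
      simpa using this
    have h4 : |ρ.im| ≤ |t| + 1 / 4 := by
      have := abs_add_le (ρ.im - t) t
      simp at this; linarith
    have h5 : |t| ≤ |ρ.im| + 1 / 4 := by
      have := abs_sub_abs_le_abs_sub t ρ.im
      rw [abs_sub_comm] at this; linarith
    have h6 := hzf ρ (by linarith) h2
    have h7 : Real.log (|ρ.im| + 2) ≤ 2 * ℓ := log_shift (by linarith)
    have h8 : d ≤ c / Real.log (|ρ.im| + 2) := by
      rw [hd]
      have : 1 ≤ Real.log (|ρ.im| + 2) := log3_ge_one (by linarith)
      gcongr
    linarith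
  have hc1 : ‖(1 + t * I : ℂ) - (17 / 16 + t * I)‖ ≤ 1 / 16 := by
    have := c_dist (σ := 1) (t := t) le_rfl (by norm_num)
    simpa using this
  have hzc : ‖z - (17 / 16 + t * I)‖ ≤ 1 / 8 := by
    have := norm_add_le (z - (1 + t * I)) ((1 + t * I : ℂ) - (17 / 16 + t * I))
    rw [sub_add_sub_cancel] at this
    linarith
  have hz0 : riemannZeta₁ z ≠ 0 := by
    intro h
    have := hleft z (by linarith) h
    linarith [hzre.1]
  refine ⟨hz0, ?_⟩
  have hσ1 : 1 < 1 + d := by linarith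
  have hσ2 : 1 + d ≤ 17 / 16 := by linarith
  set s : ℂ := (1 + d : ℝ) + t * I with hs
  have hsre : s.re = 1 + d := by simp [hs]
  have hsim : s.im = t := by simp [hs]
  have hs0 : riemannZeta₁ s ≠ 0 := zeta1_ne (by linarith)
  have hA := hS3 z hzc hz0
  have hB := hS3 s ((c_dist hσ1.le hσ2).trans (by norm_num)) hs0
  have hsn : ‖deriv riemannZeta₁ s / riemannZeta₁ s‖ ≤ (2 / c + C0 + 1) * ℓ := by
    have e := vm_eq (s := s) (by linarith)
    have e1 : deriv riemannZeta₁ s / riemannZeta₁ s = (s - 1)⁻¹ - LSeries (fun n : ℕ => (ArithmeticFunction.vonMangoldt n : ℂ)) s := by rw [e]; ring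
    rw [e1]
    have h1 := vm_norm_le hσ1 t
    have h2 := hreal _ hσ1 hσ2
    have h3 := inv_im_le (s := s) (by rw [hsim]; exact ht1)
    have h4 : 1 / (1 + d - 1) = 2 / c * ℓ := by
      rw [add_sub_cancel_left, hd]; field_simp
    rw [h4] at h2
    have h5 := norm_sub_le (s - 1)⁻¹ (LSeries (fun n : ℕ => (ArithmeticFunction.vonMangoldt n : ℂ)) s)
    have h6 : C0 + 1 ≤ (C0 + 1) * ℓ := le_mul_of_one_le_right (by linarith) hℓ1
    calc _ ≤ _ := h5
      _ ≤ 1 + (2 / c * ℓ + C0) := add_le_add h3 (h1.trans h2)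
      _ ≤ _ := by linarith
  have hsum : ‖∑ ρ ∈ S, (m ρ : ℂ) / (z - ρ) - ∑ ρ ∈ S, (m ρ : ℂ) / (s - ρ)‖
      ≤ 3 * (∑ ρ ∈ S, (m ρ : ℂ) / (s - ρ)).re := by
    rw [← Finset.sum_sub_distrib, Complex.re_sum, Finset.mul_sum]
    refine norm_sum_le_of_le _ fun ρ hρ => ?_
    have := hleft ρ (hS1 ρ hρ).2 (hS1 ρ hρ).1
    refine diff_inv hd0 ?_ ?_ ?_ _
    · rw [Complex.sub_re]; linarith [hzre.1]
    · rw [Complex.sub_re]; linarith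
    · have e : s - ρ - (z - ρ) = (d : ℂ) - (z - (1 + t * I)) := by rw [hs]; push_cast; ring
      rw [e]
      refine (norm_sub_le _ _).trans ?_
      rw [Complex.norm_real, Real.norm_eq_abs, abs_of_pos hd0]; linarith
  set X := ∑ ρ ∈ S, (m ρ : ℂ) / (z - ρ)
  set Y := ∑ ρ ∈ S, (m ρ : ℂ) / (s - ρ)
  set P := deriv riemannZeta₁ z / riemannZeta₁ z
  set Q := deriv riemannZeta₁ s / riemannZeta₁ s
  have hY : ‖Y‖ ≤ (2 / c + C0 + 1) * ℓ + C * ℓ := by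
    have := norm_sub_le Q (Q - Y)
    rw [sub_sub_cancel] at this; linarith
  have hYre := Complex.re_le_norm Y
  have h1 : ‖P‖ ≤ ‖P - X‖ + ‖X - Y‖ + ‖Y‖ := by
    have := norm_add₃_le (a := P - X) (b := X - Y) (c := Y)
    simpa using this
  nlinarith

lemma zeta1_ld_analytic {s : ℂ} (hs : riemannZeta₁ s ≠ 0) :
    AnalyticAt ℂ (fun s => deriv riemannZeta₁ s / riemannZeta₁ s) s := by
  have h : AnalyticAt ℂ riemannZeta₁ s := differentiable_riemannZeta₁.analyticAt s
  exact h.deriv.div h hs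

lemma taylor_large (n : ℕ) : ∃ A : ℝ, 0 < A ∧ ∀ t : ℝ, 2 ≤ |t| →
    ‖iteratedDeriv n (fun s => deriv riemannZeta₁ s / riemannZeta₁ s) (1 + t * I)‖
      ≤ A * Real.log (|t| + 2) ^ (n + 1) := by
  obtain ⟨C, c, hC, hc, h⟩ := zeta1_logderiv_bound
  refine ⟨n.factorial * C / c ^ n, by positivity, fun t ht => ?_⟩
  have hℓ1 := log3_ge_one (t := t) (by linarith)
  set ℓ := Real.log (|t| + 2) with hℓ
  have hℓ0 : 0 < ℓ := by linarith
  have hR : 0 < c / ℓ := by positivity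
  have := Complex.norm_iteratedDeriv_le_of_forall_mem_sphere_norm_le n hR
    (f := fun s => deriv riemannZeta₁ s / riemannZeta₁ s) (c := 1 + t * I) (C := C * ℓ) ?_ ?_
  · refine this.trans (le_of_eq ?_)
    rw [div_pow]; field_simp; ring
  · apply DifferentiableOn.diffContOnCl
    intro z hz
    rw [closure_ball _ hR.ne', Metric.mem_closedBall, dist_eq_norm] at hz
    exact (zeta1_ld_analytic (h t ht z hz).1).differentiableAt.differentiableWithinAt
  · intro z hz
    rw [mem_sphere_iff_norm] at hz
    exact (h t ht z hz.le).2

lemma taylor_small (n : ℕ) : ∃ A : ℝ, 0 < A ∧ ∀ t : ℝ, |t| ≤ 2 →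
    ‖iteratedDeriv n (fun s => deriv riemannZeta₁ s / riemannZeta₁ s) (1 + t * I)‖ ≤ A := by
  have hcont : Continuous fun t : ℝ =>
      iteratedDeriv n (fun s => deriv riemannZeta₁ s / riemannZeta₁ s) (1 + t * I) := by
    rw [continuous_iff_continuousAt]
    intro t
    have h1 : AnalyticAt ℂ (fun s => deriv riemannZeta₁ s / riemannZeta₁ s) (1 + t * I) :=
      zeta1_ld_analytic (zeta1_ne (by simp))
    have h2 := (h1.iterated_deriv n).continuousAt
    rw [← iteratedDeriv_eq_iterate] at h2
    exact ContinuousAt.comp (f := fun t : ℝ => (1 + t * I : ℂ)) h2 (by fun_prop)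
  obtain ⟨A, hA⟩ := (isCompact_Icc (a := (-2 : ℝ)) (b := 2)).exists_bound_of_continuousOn
    hcont.continuousOn
  refine ⟨max A 1, by positivity, fun t ht => (hA t (abs_le.1 ht)).trans (le_max_left _ _)⟩

lemma taylor_all (n : ℕ) : ∃ A : ℝ, 0 < A ∧ ∀ t : ℝ,
    ‖iteratedDeriv n (fun s => deriv riemannZeta₁ s / riemannZeta₁ s) (1 + t * I)‖
      ≤ A * Real.log (|t| + 2) ^ (n + 1) := by
  obtain ⟨A, hA, h1⟩ := taylor_large n
  obtain ⟨B, hB, h2⟩ := taylor_small n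
  have hl2 : 0 < Real.log 2 := Real.log_pos (by norm_num)
  refine ⟨A + B / Real.log 2 ^ (n + 1), by positivity, fun t => ?_⟩
  have hl : Real.log 2 ≤ Real.log (|t| + 2) :=
    Real.log_le_log (by norm_num) (by linarith [abs_nonneg t])
  have hl0 : 0 < Real.log (|t| + 2) := hl2.trans_le hl
  rcases le_total 2 |t| with h | h
  · refine (h1 t h).trans ?_
    gcongr
    have : 0 ≤ B / Real.log 2 ^ (n + 1) := by positivity
    linarith
  · refine (h2 t h).trans ?_
    calc B = B / Real.log 2 ^ (n + 1) * Real.log 2 ^ (n + 1) := by field_simp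
      _ ≤ B / Real.log 2 ^ (n + 1) * Real.log (|t| + 2) ^ (n + 1) := by gcongr
      _ ≤ _ := by gcongr; linarith

lemma taylor_inv (n : ℕ) {t : ℝ} (ht : t ≠ 0) :
    ‖iteratedDeriv n (fun s : ℂ => -(s - 1)⁻¹) (1 + 2 * t * I)‖
      ≤ n.factorial * (1 / |t|) ^ (n + 1) := by
  have hR : 0 < |t| := abs_pos.2 ht
  have hfar : ∀ z : ℂ, ‖z - (1 + 2 * t * I)‖ ≤ |t| → |t| ≤ ‖z - 1‖ := by
    intro z hz
    have h1 : ‖(2 * t * I : ℂ)‖ = 2 * |t| := by simp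
    have h2 := norm_sub_le (z - 1) (z - (1 + 2 * t * I))
    have e : z - 1 - (z - (1 + 2 * t * I)) = 2 * t * I := by ring
    rw [e, h1] at h2
    linarith
  have := Complex.norm_iteratedDeriv_le_of_forall_mem_sphere_norm_le n hR
    (f := fun s : ℂ => -(s - 1)⁻¹) (c := 1 + 2 * t * I) (C := 1 / |t|) ?_ ?_
  · refine this.trans (le_of_eq ?_)
    rw [div_pow]; field_simp; ring
  · apply DifferentiableOn.diffContOnCl
    intro z hz
    rw [closure_ball _ hR.ne', Metric.mem_closedBall, dist_eq_norm] at hz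
    have h0 : z - 1 ≠ 0 := norm_pos_iff.1 (hR.trans_le (hfar z hz))
    have hd : DifferentiableAt ℂ (fun s : ℂ => s - 1) z := by fun_prop
    exact (hd.inv h0).neg.differentiableWithinAt
  · intro z hz
    rw [mem_sphere_iff_norm] at hz
    rw [norm_neg, norm_inv, one_div]
    exact inv_anti₀ hR (hfar z hz.le)

/-- Let `t₀ ≠ 0` and `s₀ = 1 + 2it₀`. Then `ζ'/ζ` is analytic at `s₀` and, for every `n ≥ 0`,
its `n`-th Taylor coefficient `C_{n,s₀} = (ζ'/ζ)^{(n)}(s₀)/n!` satisfies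
`|C_{n,s₀}| ≤ A_n (|t₀|^{-(n+1)} + (log(|t₀|+2))^{n+1})` with `A_n > 0` depending only on `n`. -/
theorem stmt_6 (n : ℕ) :
    ∃ A : ℝ, 0 < A ∧ ∀ t₀ : ℝ, t₀ ≠ 0 →
      AnalyticAt ℂ (fun s => deriv riemannZeta s / riemannZeta s) (1 + 2 * t₀ * I) ∧
      ‖iteratedDeriv n (fun s => deriv riemannZeta s / riemannZeta s) (1 + 2 * t₀ * I) /
          (n.factorial : ℂ)‖
        ≤ A * ((1 / |t₀|) ^ (n + 1) + (Real.log (|t₀| + 2)) ^ (n + 1)) := by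
  obtain ⟨A, hA, h⟩ := taylor_all n
  refine ⟨1 + A * 2 ^ (n + 1), by positivity, fun t₀ ht => ?_⟩
  have hs1 : (1 + 2 * t₀ * I : ℂ) ≠ 1 := by simpa using ht
  have hs0 : riemannZeta₁ (1 + 2 * t₀ * I) ≠ 0 := zeta1_ne (by simp)
  have hev : (fun s => deriv riemannZeta s / riemannZeta s) =ᶠ[nhds (1 + 2 * t₀ * I : ℂ)]
      ((fun s : ℂ => -(s - 1)⁻¹) + fun s => deriv riemannZeta₁ s / riemannZeta₁ s) := by
    have e1 : ∀ᶠ s in nhds (1 + 2 * t₀ * I : ℂ), s ≠ 1 := eventually_ne_nhds hs1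
    have e2 : ∀ᶠ s in nhds (1 + 2 * t₀ * I : ℂ), riemannZeta₁ s ≠ 0 :=
      (differentiable_riemannZeta₁.continuous.continuousAt).eventually_ne hs0
    filter_upwards [e1, e2] with s h1 h2
    exact zeta_logderiv h1 h2
  have ha1 : AnalyticAt ℂ (fun s : ℂ => -(s - 1)⁻¹) (1 + 2 * t₀ * I) :=
    ((analyticAt_id.sub analyticAt_const).inv (sub_ne_zero.2 hs1)).neg
  have ha2 := zeta1_ld_analytic hs0
  refine ⟨(ha1.add ha2).congr hev.symm, ?_⟩
  rw [hev.iteratedDeriv_eq n, iteratedDeriv_add ha1.contDiffAt ha2.contDiffAt, norm_div,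
    Complex.norm_natCast]
  have hf : (1 : ℝ) ≤ n.factorial := by exact_mod_cast n.factorial_pos
  have hf0 : (0 : ℝ) < n.factorial := by linarith
  have hb1 := taylor_inv n ht
  have hb2 := h (2 * t₀)
  have e : ((2 * t₀ : ℝ) : ℂ) = 2 * t₀ := by push_cast; rfl
  rw [e] at hb2
  have hl0 : 0 < Real.log (|t₀| + 2) := Real.log_pos (by linarith [abs_nonneg t₀])
  have hl1 : 0 ≤ Real.log (|2 * t₀| + 2) := Real.log_nonneg (by linarith [abs_nonneg (2 * t₀)])
  have hl : Real.log (|2 * t₀| + 2) ≤ 2 * Real.log (|t₀| + 2) :=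
    log_shift (by rw [abs_mul]; norm_num)
  have hb3 : A * Real.log (|2 * t₀| + 2) ^ (n + 1)
      ≤ A * 2 ^ (n + 1) * Real.log (|t₀| + 2) ^ (n + 1) := by
    rw [mul_assoc, ← mul_pow]; gcongr
  set U := (1 / |t₀|) ^ (n + 1) with hU
  set V := Real.log (|t₀| + 2) ^ (n + 1) with hV
  have hU0 : 0 ≤ U := by positivity
  have hV0 : 0 ≤ V := by positivity
  set B := A * 2 ^ (n + 1) with hB
  have hB0 : 0 ≤ B := by positivity
  rw [div_le_iff₀ hf0]
  refine (norm_add_le _ _).trans ?_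
  have g1 : B * V ≤ B * V * n.factorial := le_mul_of_one_le_right (by positivity) hf
  have g2 : 0 ≤ V * n.factorial := by positivity
  have g3 : 0 ≤ B * U * n.factorial := by positivity
  nlinarith
end

section
/- Define the sequence (E_n)_{n≥0} by E_0 = −1 and E_n = (n−1)γ_{n−1} − Σ_{k=1}^{n} γ_{k−1} E_{n−k} for n ≥ 1, where γ_j are the Stieltjes constants. Then, in a neighbourhood of s = 1, one has the convergent power series expansion (s − 1) · ζ'(s)/ζ(s) = Σ_{n≥0} E_n (s − 1)^n. -/
open Complex

open Filter Topology in
lemma coeff_unique {f : ℂ → ℂ} {a : ℕ → ℂ} (hf : AnalyticAt ℂ f 1)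
    (h : ∀ᶠ z in 𝓝 (1 : ℂ), HasSum (fun n => a n * (z - 1) ^ n) (f z)) (n : ℕ) :
    iteratedDeriv n f 1 = n.factorial * a n := by
  have h2 : HasFPowerSeriesAt f (FormalMultilinearSeries.ofScalars ℂ a) 1 := by
    rw [hasFPowerSeriesAt_iff']
    filter_upwards [h] with z hz
    simpa [FormalMultilinearSeries.coeff_ofScalars, mul_comm] using hz
  have h3 := congrArg (fun p => FormalMultilinearSeries.coeff p n)
    (hf.hasFPowerSeriesAt.eq_formalMultilinearSeries h2)
  simp only [FormalMultilinearSeries.coeff_ofScalars] at h3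
  rw [← h3]
  have : (n.factorial : ℂ) ≠ 0 := by exact_mod_cast n.factorial_ne_zero
  field_simp

lemma iter_mul_sub {f : ℂ → ℂ} (hf : AnalyticAt ℂ f 1) (n : ℕ) :
    iteratedDeriv n ((fun s => s - 1) * deriv f) 1 = n * iteratedDeriv n f 1 := by
  rw [iteratedDeriv_mul (by fun_prop) hf.deriv.contDiffAt]
  have h1 : ∀ i, iteratedDeriv i (fun s : ℂ => s - 1) 1 = if i = 1 then 1 else 0 := by
    intro i
    rw [iteratedDeriv_comp_sub_const i (fun s : ℂ => s) 1]
    simp [iteratedDeriv_fun_id]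
    grind
  simp only [h1]
  rcases n with _ | n
  · simp
  · rw [Finset.sum_eq_single 1]
    · simp [iteratedDeriv_succ']
    · intro b _ hb
      simp [hb]
    · simp

open Filter Topology in
theorem stmt_7 (γ : ℕ → ℂ)
    (hγ : ∃ r : ℝ, 0 < r ∧ ∀ s : ℂ, s ≠ 1 → ‖s - 1‖ < r →
      HasSum (fun n : ℕ => γ n * (s - 1) ^ n) (riemannZeta s - 1 / (s - 1)))
    (E : ℕ → ℂ) (hE0 : E 0 = -1)
    (hE : ∀ n : ℕ, 1 ≤ n →
      E n = ((n : ℂ) - 1) * γ (n - 1) - ∑ k ∈ Finset.Icc 1 n, γ (k - 1) * E (n - k)) :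
    ∃ r : ℝ, 0 < r ∧ ∀ s : ℂ, s ≠ 1 → ‖s - 1‖ < r →
      HasSum (fun n : ℕ => E n * (s - 1) ^ n)
        ((s - 1) * (deriv riemannZeta s / riemannZeta s)) := by
  obtain ⟨r, hr, hs⟩ := hγ
  set F : ℂ → ℂ := Function.update (fun s ↦ (s - 1) * riemannZeta s) 1 1 with hF
  have hF1 : F 1 = 1 := by simp [hF]
  have hFne : ∀ s, s ≠ 1 → F s = (s - 1) * riemannZeta s := fun s hs => by
    simp [hF, Function.update_of_ne hs]
  have hFeq : ∀ s, s ≠ 1 → F =ᶠ[𝓝 s] fun s => (s - 1) * riemannZeta s := fun s hs => by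
    filter_upwards [isOpen_ne.mem_nhds hs] with t ht using hFne t ht
  have hder : ∀ s, s ≠ 1 →
      HasDerivAt F (riemannZeta s + (s - 1) * deriv riemannZeta s) s := fun s hs => by
    have := ((hasDerivAt_id s).sub_const 1).mul (differentiableAt_riemannZeta hs).hasDerivAt
    simp only [one_mul] at this
    exact this.congr_of_eventuallyEq (hFeq s hs)
  have hF1an : AnalyticAt ℂ F 1 := by
    apply analyticAt_of_differentiable_on_punctured_nhds_of_continuousAt
    · filter_upwards [self_mem_nhdsWithin] with t ht using (hder t ht).differentiableAt
    · simpa only [hF, continuousAt_update_same] using riemannZeta_residue_one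
  have hFd : Differentiable ℂ F := fun s => by
    by_cases h : s = 1
    · exact h ▸ hF1an.differentiableAt
    · exact (hder s h).differentiableAt
  -- coefficients of F
  let a : ℕ → ℂ := fun n => if n = 0 then 1 else γ (n - 1)
  have hFa : ∀ n, iteratedDeriv n F 1 = n.factorial * a n := by
    apply coeff_unique hF1an
    filter_upwards [Metric.ball_mem_nhds (1 : ℂ) hr] with z hz
    rw [← hasSum_nat_add_iff' 1]
    by_cases h : z = 1
    · subst h
      simp [hF1, a, hasSum_zero]
    · have := (hs z h (by simpa [dist_eq_norm] using hz)).mul_left (z - 1)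
      have hz0 : z - 1 ≠ 0 := sub_ne_zero.mpr h
      have e1 : (fun n => a (n + 1) * (z - 1) ^ (n + 1)) =
          fun i => (z - 1) * (γ i * (z - 1) ^ i) := by
        funext n
        simp only [a, Nat.succ_ne_zero, if_false, Nat.add_sub_cancel]
        ring
      have e2 : F z - ∑ i ∈ Finset.range 1, a i * (z - 1) ^ i =
          (z - 1) * (riemannZeta z - 1 / (z - 1)) := by
        simp [a, hFne z h]
        field_simp
      rw [e1, e2]
      exact this
  -- G
  obtain ⟨ρ, hρ, hne⟩ : ∃ ρ > 0, ∀ s ∈ Metric.ball (1 : ℂ) ρ, F s ≠ 0 := by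
    have : ∀ᶠ s in 𝓝 (1 : ℂ), F s ≠ 0 :=
      hF1an.continuousAt.eventually_ne (by simp [hF1])
    exact Metric.eventually_nhds_iff_ball.mp this
  let G : ℂ → ℂ := fun s => (s - 1) * deriv F s / F s - 1
  have hdF : Differentiable ℂ (deriv F) := fun s => (hFd.analyticAt s).deriv.differentiableAt
  have hGd : DifferentiableOn ℂ G (Metric.ball 1 ρ) := by
    intro s hs
    have h1 := hne s hs
    have h2 := hdF s
    have h3 := hFd s
    exact ((((differentiableAt_id.sub_const 1).mul h2).div h3 h1).sub_const 1).differentiableWithinAt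
  have hGan : AnalyticAt ℂ G 1 := hGd.analyticAt (Metric.ball_mem_nhds _ hρ)
  have hprod : ∀ n, iteratedDeriv n (F * G) 1 = n * iteratedDeriv n F 1 - iteratedDeriv n F 1 := by
    intro n
    have hc : ContDiffAt ℂ n ((fun s => s - 1) * deriv F) 1 :=
      (ContDiffAt.sub contDiffAt_id contDiffAt_const).mul hF1an.deriv.contDiffAt
    rw [← iter_mul_sub hF1an, ← iteratedDeriv_sub hc hF1an.contDiffAt]
    · apply Filter.EventuallyEq.iteratedDeriv_eq
      filter_upwards [Metric.ball_mem_nhds (1 : ℂ) hρ] with s hs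
      have := hne s hs
      simp [G]
      field_simp
  have hrec : ∀ n : ℕ, ∑ i ∈ Finset.range (n + 1),
      a i * (iteratedDeriv (n - i) G 1 / (n - i).factorial) = (n - 1) * a n := by
    intro n
    have h := hprod n
    rw [iteratedDeriv_mul hF1an.contDiffAt hGan.contDiffAt] at h
    simp only [hFa] at h
    have hn : (n.factorial : ℂ) ≠ 0 := by exact_mod_cast n.factorial_ne_zero
    apply mul_left_cancel₀ hn
    rw [show (n.factorial : ℂ) * ((n - 1) * a n) =
      n * (n.factorial * a n) - n.factorial * a n by ring, ← h, Finset.mul_sum]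
    apply Finset.sum_congr rfl
    intro i hi
    have hi' : i ≤ n := by simpa [Nat.lt_succ_iff] using hi
    rw [← Nat.choose_mul_factorial_mul_factorial hi']
    have : ((n - i).factorial : ℂ) ≠ 0 := by exact_mod_cast (n - i).factorial_ne_zero
    push_cast
    field_simp
  have hGE : ∀ n, iteratedDeriv n G 1 / n.factorial = E n := by
    intro n
    induction n using Nat.strong_induction_on with
    | _ n ih =>
      have h := hrec n
      rcases Nat.eq_zero_or_pos n with rfl | hn
      · simp [a] at h
        simp [h, hE0]
      · rw [hE n hn]
        rw [Finset.range_eq_Ico, Finset.sum_eq_sum_Ico_succ_bot (by omega)] at h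
        have h2 : ∑ k ∈ Finset.Icc 1 n, γ (k - 1) * E (n - k) =
            ∑ i ∈ Finset.Ico (0 + 1) (n + 1),
              a i * (iteratedDeriv (n - i) G 1 / (n - i).factorial) := by
          apply Finset.sum_congr
          · ext; simp
          · intro i hi
            simp at hi
            rw [ih (n - i) (by omega)]
            have : i ≠ 0 := by omega
            simp [a, this]
        rw [h2]
        have : n ≠ 0 := by omega
        simp only [a, this, if_true, if_false, one_mul, Nat.sub_zero] at h ⊢
        rw [← h]
        ring
  refine ⟨ρ, hρ, fun s hs1 hsρ => ?_⟩
  have hmem : s ∈ Metric.ball (1 : ℂ) ρ := by simpa [dist_eq_norm] using hsρ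
  have h := hasSum_taylorSeries_on_ball hGd hmem
  have e1 : (fun n : ℕ => E n * (s - 1) ^ n) =
      fun n : ℕ => (n.factorial : ℂ)⁻¹ • (s - 1) ^ n • iteratedDeriv n G 1 := by
    funext n
    rw [← hGE n]
    simp only [smul_eq_mul]
    ring
  have e2 : (s - 1) * (deriv riemannZeta s / riemannZeta s) = G s := by
    have h1 := hne s hmem
    have h0 : s - 1 ≠ 0 := sub_ne_zero.mpr hs1
    simp only [G]
    rw [(hder s hs1).deriv]
    rw [hFne s hs1] at h1 ⊢
    have hz : riemannZeta s ≠ 0 := right_ne_zero_of_mul h1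
    field_simp
    ring
  rw [e1, e2]
  exact h
end

section
/- Define the sequence (μ_j)_{j ≥ 0} by μ_0 = 1 and μ_j = Σ_{m ≥ 1} Λ_j(m)² / m² for j ≥ 1. Then for every integer k ≥ 0, the Hankel determinants det(μ_{i+j})_{i,j=0}^{k} and det(μ_{i+j+1})_{i,j=0}^{k} are both nonnegative. -/
/-- `Lam j m` is the `j`-fold Dirichlet convolution of the von Mangoldt function with itself,
evaluated at `m`, i.e. `Λ_j(m) = Σ_{m = m₁⋯m_j} Λ(m₁)⋯Λ(m_j)`. -/
noncomputable def Lam (j m : ℕ) : ℝ := (ArithmeticFunction.vonMangoldt ^ j) m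

/-- The moment sequence: `μ 0 = 1` and `μ j = Σ_{m ≥ 1} Λ_j(m)²/m²` for `j ≥ 1`. -/
noncomputable def momSeq (j : ℕ) : ℝ :=
  if j = 0 then 1 else ∑' m : ℕ, (Lam j m) ^ 2 / (m : ℝ) ^ 2

open Filter Topology

lemma h17_tau {M G : Type*} [Monoid M] [CommGroup G] (φ : M →* G) (a : MonoidAlgebra ℝ M)
    (b : MonoidAlgebra ℝ G) :
    (MonoidAlgebra.mapDomainRingHom ℝ (invMonoidHom : G →* G)
      (MonoidAlgebra.mapDomainRingHom ℝ φ a) * b).coeff 1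
      = a.coeff.sum (fun m r => r * b.coeff (φ m)) := by
  induction a using MonoidAlgebra.induction_linear with
  | zero => simp
  | add x y hx hy =>
    rw [map_add, map_add, add_mul, MonoidAlgebra.coeff_add, Finsupp.add_apply, hx, hy,
      MonoidAlgebra.coeff_add, Finsupp.sum_add_index']
    · simp
    · intros; ring
  | single m r => simp [MonoidAlgebra.coeff_single_mul_apply]

lemma h17_gram {G : Type*} [CommGroup G] {n : ℕ} (b : Fin n → MonoidAlgebra ℝ G) :
    0 ≤ Matrix.det (Matrix.of fun i j : Fin n =>
      (MonoidAlgebra.mapDomainRingHom ℝ (invMonoidHom : G →* G) (b i) * b j).coeff 1) := by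
  classical
  set S : Finset G := Finset.univ.biUnion fun i => (b i).coeff.support with hS
  set B : Matrix (Fin n) S ℝ := Matrix.of fun i g => (b i).coeff g with hB
  have h : (Matrix.of fun i j : Fin n =>
      (MonoidAlgebra.mapDomainRingHom ℝ (invMonoidHom : G →* G) (b i) * b j).coeff 1)
      = B * B.conjTranspose := by
    ext i j
    have := h17_tau (MonoidHom.id G) (b i) (b j)
    simp only [MonoidAlgebra.mapDomainRingHom_id, RingHom.id_apply, MonoidHom.id_apply] at this
    rw [Matrix.of_apply, this, Finsupp.sum_of_support_subset (s := S)]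
    · simp only [Matrix.mul_apply, hB, Matrix.conjTranspose_apply, Matrix.of_apply, star_trivial]
      rw [Finset.sum_coe_sort S (fun g => (b i).coeff g * (b j).coeff g)]
    · exact Finset.subset_biUnion_of_mem (fun i => (b i).coeff.support) (Finset.mem_univ i)
    · simp
  rw [h]
  exact (Matrix.posSemidef_self_mul_conjTranspose B).det_nonneg

/-- Truncated von Mangoldt function. -/
noncomputable def h17LN (N : ℕ) : ArithmeticFunction ℝ :=
  ⟨fun m => if m ≤ N then ArithmeticFunction.vonMangoldt m else 0, by simp⟩

noncomputable def h17F (N : ℕ) : MonoidAlgebra ℝ ℕ+ :=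
  ∑ i ∈ Finset.range N, MonoidAlgebra.single i.succPNat
    (ArithmeticFunction.vonMangoldt (i + 1) / ((i + 1 : ℕ) : ℝ))

lemma h17_coeff (N : ℕ) (m : ℕ+) : (h17F N).coeff m = h17LN N m / (m : ℝ) := by
  classical
  rw [h17F, MonoidAlgebra.coeff_sum, Finsupp.finsetSum_apply]
  simp only [MonoidAlgebra.coeff_single, Finsupp.single_apply]
  obtain ⟨k, rfl⟩ : ∃ k : ℕ, m = k.succPNat := ⟨m.natPred, by simp⟩
  simp only [Nat.succPNat_inj, Finset.sum_ite_eq', Finset.mem_range, h17LN]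
  simp only [ArithmeticFunction.coe_mk, Nat.succPNat_coe, Nat.succ_eq_add_one, Nat.succ_le_iff]
  split_ifs <;> simp

lemma h17_coeff_pow (N j : ℕ) (m : ℕ+) :
    (h17F N ^ j).coeff m = (h17LN N ^ j) m / (m : ℝ) := by
  classical
  induction j generalizing m with
  | zero =>
    simp only [pow_zero, MonoidAlgebra.one_def, MonoidAlgebra.coeff_single, Finsupp.single_apply,
      ArithmeticFunction.one_apply]
    by_cases h : m = 1
    · subst h; simp
    · rw [if_neg (Ne.symm h), if_neg (by simpa using h)]; simp
  | succ j ih =>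
    have hinj : Function.Injective (fun p : ℕ+ × ℕ+ => ((p.1 : ℕ), (p.2 : ℕ))) := by
      rintro ⟨a, b⟩ ⟨c, d⟩ h
      simpa using h
    rw [pow_succ, pow_succ, MonoidAlgebra.coeff_mul_antidiag _ _ _
      ((Nat.divisorsAntidiagonal m).preimage _ hinj.injOn), ArithmeticFunction.mul_apply,
      Finset.sum_div, ← Finset.sum_preimage (fun p : ℕ+ × ℕ+ => ((p.1 : ℕ), (p.2 : ℕ))) _
        hinj.injOn]
    · refine Finset.sum_congr rfl ?_
      rintro ⟨a, b⟩ h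
      simp only [Finset.mem_preimage, Nat.mem_divisorsAntidiagonal] at h
      rw [ih, h17_coeff, ← h.1]
      push_cast
      rw [div_mul_div_comm]
    · rintro ⟨a, b⟩ h1 h2
      exfalso
      apply h2
      simp only [Nat.mem_divisorsAntidiagonal] at h1
      have ha : 0 < a := Nat.pos_of_ne_zero (by rintro rfl; exact h1.2 (by rw [← h1.1]; simp))
      have hb : 0 < b := Nat.pos_of_ne_zero (by rintro rfl; exact h1.2 (by rw [← h1.1]; simp))
      exact ⟨(⟨a, ha⟩, ⟨b, hb⟩), rfl⟩
    · rintro ⟨a, b⟩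
      simp only [Finset.mem_preimage, Nat.mem_divisorsAntidiagonal, ne_eq, PNat.ne_zero,
        not_false_eq_true, and_true]
      rw [← PNat.mul_coe, PNat.coe_inj]

lemma h17_LN_nonneg (N j m : ℕ) : 0 ≤ (h17LN N ^ j) m := by
  induction j generalizing m with
  | zero => simp [ArithmeticFunction.one_apply]; split_ifs <;> simp
  | succ j ih =>
    rw [pow_succ, ArithmeticFunction.mul_apply]
    refine Finset.sum_nonneg fun p _ => mul_nonneg (ih _) ?_
    simp only [h17LN, ArithmeticFunction.coe_mk]
    split_ifs
    · exact ArithmeticFunction.vonMangoldt_nonneg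
    · exact le_rfl

lemma h17_LN_le (N j m : ℕ) : (h17LN N ^ j) m ≤ Real.log m ^ j := by
  induction j generalizing m with
  | zero => simp [ArithmeticFunction.one_apply]; split_ifs <;> simp
  | succ j ih =>
    rw [pow_succ, ArithmeticFunction.mul_apply]
    calc _ ≤ ∑ p ∈ m.divisorsAntidiagonal,
          Real.log m ^ j * ArithmeticFunction.vonMangoldt p.2 := by
          refine Finset.sum_le_sum fun p hp => ?_
          rw [Nat.mem_divisorsAntidiagonal] at hp
          have hp1 : p.1 ≤ m := Nat.le_of_dvd (Nat.pos_of_ne_zero hp.2) ⟨_, hp.1.symm⟩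
          have hp0 : 0 < p.1 := Nat.pos_of_ne_zero (by
            intro h; apply hp.2; rw [← hp.1, h, zero_mul])
          have h1 : Real.log p.1 ≤ Real.log m :=
            Real.log_le_log (by exact_mod_cast hp0) (by exact_mod_cast hp1)
          have h0 : 0 ≤ Real.log p.1 := Real.log_natCast_nonneg _
          refine mul_le_mul ((ih _).trans (by gcongr)) ?_ ?_ (by positivity)
          · simp only [h17LN, ArithmeticFunction.coe_mk]
            split_ifs
            · exact le_rfl
            · exact ArithmeticFunction.vonMangoldt_nonneg
          · simpa using h17_LN_nonneg N 1 p.2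
      _ = Real.log m ^ (j + 1) := by
          rw [← Finset.mul_sum,
            Nat.sum_divisorsAntidiagonal' (fun _ i => ArithmeticFunction.vonMangoldt i),
            ArithmeticFunction.vonMangoldt_sum, pow_succ]

lemma h17_LN_eq (N j m : ℕ) (hm : m ≤ N) : (h17LN N ^ j) m = Lam j m := by
  unfold Lam
  induction j generalizing m with
  | zero => simp
  | succ j ih =>
    rw [pow_succ, pow_succ, ArithmeticFunction.mul_apply, ArithmeticFunction.mul_apply]
    refine Finset.sum_congr rfl fun p hp => ?_
    rw [Nat.mem_divisorsAntidiagonal] at hp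
    have hp1 : p.1 ≤ m := Nat.le_of_dvd (Nat.pos_of_ne_zero hp.2) ⟨_, hp.1.symm⟩
    have hp2 : p.2 ≤ m := Nat.le_of_dvd (Nat.pos_of_ne_zero hp.2) ⟨p.1, by rw [mul_comm, hp.1]⟩
    rw [ih _ (hp1.trans hm)]
    congr 1
    simp [h17LN, hp2.trans hm]

lemma h17_summable (j : ℕ) : Summable fun m : ℕ => (Real.log m ^ j) ^ 2 / (m : ℝ) ^ 2 := by
  have h := (isLittleO_log_rpow_rpow_atTop (s := 1 / 2) ((2 * j : ℕ) : ℝ) (by norm_num)).isBigO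
  have h2 := h.comp_tendsto tendsto_natCast_atTop_atTop
  refine summable_of_isBigO_nat (g := fun m : ℕ => (m : ℝ) ^ (-(3 / 2) : ℝ))
    (Real.summable_nat_rpow.2 (by norm_num)) ?_
  have h3 := h2.mul (Asymptotics.isBigO_refl (fun m : ℕ => ((m : ℝ) ^ 2)⁻¹) atTop)
  refine (h3.congr' ?_ ?_)
  · filter_upwards with m
    simp only [Function.comp, Real.rpow_natCast]
    rw [div_eq_mul_inv, pow_mul, ← pow_mul, ← pow_mul, mul_comm 2 j]
  · filter_upwards [eventually_gt_atTop 0] with m hm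
    have hm' : (0 : ℝ) < m := by exact_mod_cast hm
    simp only [Function.comp]
    rw [← Real.rpow_natCast, ← Real.rpow_neg hm'.le, ← Real.rpow_add hm']
    norm_num

lemma h17_momSeq (j : ℕ) : momSeq j = ∑' m : ℕ, (Lam j m) ^ 2 / (m : ℝ) ^ 2 := by
  unfold momSeq
  split_ifs with h
  · subst h
    rw [tsum_eq_single 1]
    · simp [Lam]
    · intro m hm
      simp [Lam, ArithmeticFunction.one_apply, hm]
  · rfl

noncomputable def h17mom (N j : ℕ) : ℝ := ∑' m : ℕ, ((h17LN N ^ j) m) ^ 2 / (m : ℝ) ^ 2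

lemma h17_tendsto (j : ℕ) : Tendsto (fun N => h17mom N j) atTop (𝓝 (momSeq j)) := by
  rw [h17_momSeq]
  refine tendsto_tsum_of_dominated_convergence (h17_summable j) ?_ ?_
  · intro m
    refine tendsto_const_nhds.congr' ?_
    filter_upwards [eventually_ge_atTop m] with N hN
    rw [h17_LN_eq N j m hN]
  · filter_upwards with N m
    rw [Real.norm_of_nonneg (by positivity)]
    have := h17_LN_nonneg N j m
    have := h17_LN_le N j m
    gcongr

/-- Embedding of the positive integers in the positive rationals. -/
def h17phi : ℕ+ →* ℚˣ where
  toFun m := Units.mk0 (m : ℚ) (by exact_mod_cast m.ne_zero)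
  map_one' := by ext; simp
  map_mul' a b := by ext; simp

lemma h17phi_inj : Function.Injective h17phi := by
  intro a b h
  have := congrArg (fun u : ℚˣ => (u : ℚ)) h
  simpa [h17phi] using this

lemma h17_mom_eq (N j : ℕ) : h17mom N j =
    (MonoidAlgebra.mapDomainRingHom ℝ (invMonoidHom : ℚˣ →* ℚˣ)
      (MonoidAlgebra.mapDomainRingHom ℝ h17phi (h17F N ^ j)) *
      MonoidAlgebra.mapDomainRingHom ℝ h17phi (h17F N ^ j)).coeff 1 := by
  rw [h17_tau]
  have h : ∀ m : ℕ+, (MonoidAlgebra.mapDomainRingHom ℝ h17phi (h17F N ^ j)).coeff (h17phi m)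
      = (h17F N ^ j).coeff m := by
    intro m
    exact Finsupp.mapDomain_apply h17phi_inj _ _
  simp only [h]
  rw [Finsupp.sum, ← tsum_eq_sum (L := .unconditional _)
    (f := fun m : ℕ+ => (h17F N ^ j).coeff m * (h17F N ^ j).coeff m)]
  · simp only [h17_coeff_pow]
    rw [h17mom, ← PNat.coe_injective.tsum_eq]
    · refine tsum_congr fun m => ?_
      ring
    · intro m hm
      have hm0 : m ≠ 0 := by rintro rfl; simp at hm
      exact ⟨⟨m, Nat.pos_of_ne_zero hm0⟩, rfl⟩
  · intro m hm
    simp [Finsupp.notMem_support_iff.1 hm]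

theorem stmt_17 (k : ℕ) :
    0 ≤ Matrix.det (Matrix.of fun i j : Fin (k + 1) => momSeq ((i : ℕ) + (j : ℕ))) ∧
      0 ≤ Matrix.det (Matrix.of fun i j : Fin (k + 1) => momSeq ((i : ℕ) + (j : ℕ) + 1)) := by
  have key : ∀ (e : ℕ), (∀ N, 0 ≤ Matrix.det
      (Matrix.of fun i j : Fin (k + 1) => h17mom N ((i : ℕ) + (j : ℕ) + e))) →
      0 ≤ Matrix.det (Matrix.of fun i j : Fin (k + 1) => momSeq ((i : ℕ) + (j : ℕ) + e)) := by
    intro e he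
    have hc : Continuous fun A : Matrix (Fin (k + 1)) (Fin (k + 1)) ℝ => A.det :=
      continuous_id.matrix_det
    refine ge_of_tendsto' ((hc.tendsto _).comp (x := atTop) (f := fun N : ℕ =>
      (Matrix.of fun i j : Fin (k + 1) => h17mom N ((i : ℕ) + (j : ℕ) + e))) ?_) he
    refine tendsto_pi_nhds.2 fun i => tendsto_pi_nhds.2 fun j => ?_
    exact h17_tendsto _
  -- the involution is an involution
  have hinv : ∀ x : MonoidAlgebra ℝ ℚˣ,
      MonoidAlgebra.mapDomainRingHom ℝ (invMonoidHom : ℚˣ →* ℚˣ)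
        (MonoidAlgebra.mapDomainRingHom ℝ (invMonoidHom : ℚˣ →* ℚˣ) x) = x := by
    intro x
    rw [← RingHom.comp_apply, ← MonoidAlgebra.mapDomainRingHom_comp]
    have : (invMonoidHom : ℚˣ →* ℚˣ).comp invMonoidHom = MonoidHom.id _ := by
      ext; simp
    rw [this, MonoidAlgebra.mapDomainRingHom_id, RingHom.id_apply]
  constructor
  · refine key 0 fun N => ?_
    set f := MonoidAlgebra.mapDomainRingHom ℝ h17phi (h17F N) with hf
    convert h17_gram (fun i : Fin (k + 1) =>
      (MonoidAlgebra.mapDomainRingHom ℝ (invMonoidHom : ℚˣ →* ℚˣ) f * f) ^ (i : ℕ)) using 6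
    rw [h17_mom_eq]
    simp only [map_pow, map_mul, hinv, ← hf]
    congr 2
    ring
  · refine key 1 fun N => ?_
    set f := MonoidAlgebra.mapDomainRingHom ℝ h17phi (h17F N) with hf
    convert h17_gram (fun i : Fin (k + 1) =>
      f * (MonoidAlgebra.mapDomainRingHom ℝ (invMonoidHom : ℚˣ →* ℚˣ) f * f) ^ (i : ℕ)) using 6
    rw [h17_mom_eq]
    simp only [map_pow, map_mul, hinv, ← hf]
    congr 2
    ring
end
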